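/- Let d ≥ 2, let C = hO^d be a convex body with h ∈ GL_d(K̃), and let Λ = gR^d be a lattice with g ∈ GL_d(K̃). Then CovRad_C(Λ) = q^{-1}·λ_d(h^{-1}gR^d); that is, sup_{w ∈ K̃^d} inf_{u ∈ Λ} ‖h^{-1}(w − u)‖ = q^{-1}·λ_d(h^{-1}Λ). -/

import Mathlib

noncomputable section

open scoped Classical

variable (Fq : Type) [Field Fq] [Fintype Fq]

/-- `K̃ = 𝔽_q((x⁻¹))`, realized as formal Laurent series in `t = x⁻¹`. -/
abbrev Kt := LaurentSeries Fq

/-- The element `x` of `K̃` (the inverse of the Laurent series variable). -/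
def Kx : Kt Fq := HahnSeries.single (-1 : ℤ) 1

/-- Absolute value `|f| = q^{deg f}`, i.e. `q^{-order f}` in terms of `t = x⁻¹`. -/
def Kabs (f : Kt Fq) : ℝ := if f = 0 then 0 else (Fintype.card Fq : ℝ) ^ (-f.order)

/-- The ring embedding of `R = 𝔽_q[x]` into `K̃`. -/
def polyK : Polynomial Fq →+* Kt Fq := (Polynomial.aeval (Kx Fq)).toRingHom

/-- Sup norm on `K̃^d`. -/
def vnorm {d : ℕ} (v : Fin d → Kt Fq) : ℝ := ⨆ i, Kabs Fq (v i)

/-- The lattice `g·R^d`. -/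
def lattice {d : ℕ} (g : Matrix (Fin d) (Fin d) (Kt Fq)) : Set (Fin d → Kt Fq) :=
  {v | ∃ c : Fin d → Polynomial Fq, v = g.mulVec fun j => polyK Fq (c j)}

/-- `i`-th successive minimum of `Λ` with respect to a norm `nrm`: the least `r > 0` such that
`Λ` contains `i` linearly independent vectors of norm at most `r`. -/
def minimaN {d : ℕ} (nrm : (Fin d → Kt Fq) → ℝ) (Λ : Set (Fin d → Kt Fq)) (i : ℕ) : ℝ :=
  sInf {r : ℝ | 0 < r ∧ ∃ v : Fin i → Fin d → Kt Fq,
    (∀ j, v j ∈ Λ) ∧ LinearIndependent (Kt Fq) v ∧ ∀ j, nrm (v j) ≤ r}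

/-- `i`-th successive minimum with respect to the sup norm. -/
def minima {d : ℕ} (Λ : Set (Fin d → Kt Fq)) (i : ℕ) : ℝ := minimaN Fq (vnorm Fq) Λ i

/-- Covering radius of `Λ` with respect to the norm `nrm`. -/
def covRad {d : ℕ} (nrm : (Fin d → Kt Fq) → ℝ) (Λ : Set (Fin d → Kt Fq)) : ℝ :=
  ⨆ w : Fin d → Kt Fq, ⨅ u : Λ, nrm (w - u.1)

/-- Length of the shortest nonzero vector of `Λ`. -/
def ell {d : ℕ} (Λ : Set (Fin d → Kt Fq)) : ℝ :=
  sInf {r : ℝ | ∃ v ∈ Λ, v ≠ 0 ∧ vnorm Fq v = r}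

/-- `Λ` is well rounded: it contains `d` linearly independent vectors of norm `ℓ(Λ)`. -/
def IsWellRounded {d : ℕ} (Λ : Set (Fin d → Kt Fq)) : Prop :=
  ∃ v : Fin d → Fin d → Kt Fq, (∀ j, v j ∈ Λ) ∧ LinearIndependent (Kt Fq) v ∧
    ∀ j, vnorm Fq (v j) = ell Fq Λ

/-- The multiplicative "norm" `N(v) = ∏ |v i|`. -/
def Nprod {d : ℕ} (v : Fin d → Kt Fq) : ℝ := ∏ i, Kabs Fq (v i)

/-- The Minkowski function `μ(Λ) = sup_w inf_{u ∈ Λ} N(w - u)`. -/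
def mink {d : ℕ} (Λ : Set (Fin d → Kt Fq)) : ℝ :=
  ⨆ w : Fin d → Kt Fq, ⨅ u : Λ, Nprod Fq (w - u.1)

/-!
Let `q = |𝔽_q|` and let `Λ` be an `R`-submodule of `K̃^d` spanning `K̃^d`. If `v₁, …, v_d ∈ Λ` are
independent of norm at most `r`, rounding the coordinates of `w` in this basis to their polynomial
parts moves `w` by at most `q⁻¹ r`, by the ultrametric inequality. Conversely, if every point is at
distance less than `|y|` from `Λ`, then the lattice vectors approximating `y e₁, …, y e_d` have norm
at most `|y|`, and they are independent because they perturb a multiple of the standard basis by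
less than its length. Since `|y|` runs through all powers of `q`, the second bound loses at most the
factor `q` that the first one gains. A convex body `h O^d` reduces to `O^d` by applying `h⁻¹`.
-/

theorem linearIndependent_of_forall_abv_single_sub_lt {K S ι : Type*} [Ring K] [Semiring S]
    [LinearOrder S] [IsStrictOrderedRing S] [Finite ι] [DecidableEq ι] {abv : AbsoluteValue K S}
    (habv : IsNonarchimedean abv) {y : K} {u : ι → ι → K}
    (hu : ∀ i j, abv ((Pi.single j y - u j : ι → K) i) < abv y) : LinearIndependent K u := by
  cases nonempty_fintype ι
  rw [Fintype.linearIndependent_iff]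
  intro c hc
  by_contra! ⟨i₀, hi₀⟩
  have : Nonempty ι := ⟨i₀⟩
  obtain ⟨i, hi⟩ := Finite.exists_max fun j => abv (c j)
  have hci : 0 < abv (c i) := (abv.pos hi₀).trans_le (hi i₀)
  have hsum : ∑ j, c j * (Pi.single j y - u j : ι → K) i = c i * y := by
    have hcoord : ∑ j, c j * u j i = 0 := by simpa using congrFun hc i
    simp [mul_sub, Pi.single_apply, hcoord]
  obtain ⟨j, -, hj⟩ := habv.finset_image_add_of_nonempty
    (fun j => c j * (Pi.single j y - u j : ι → K) i) Finset.univ_nonempty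
  refine lt_irrefl (abv (c i * y)) ?_
  calc abv (c i * y) ≤ abv (c j) * abv ((Pi.single j y - u j : ι → K) i) := by
        rw [← abv.map_mul, ← hsum]; exact hj
    _ ≤ abv (c i) * abv ((Pi.single j y - u j : ι → K) i) :=
        mul_le_mul_of_nonneg_right (hi j) (abv.nonneg _)
    _ < abv (c i) * abv y := mul_lt_mul_of_pos_left (hu i j) hci
    _ = abv (c i * y) := (abv.map_mul _ _).symm

section

variable {Fq}

theorem one_lt_card_real : 1 < (Fintype.card Fq : ℝ) :=
  Nat.one_lt_cast.2 Fintype.one_lt_card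

theorem Kabs_of_ne_zero {f : Kt Fq} (hf : f ≠ 0) :
    Kabs Fq f = (Fintype.card Fq : ℝ) ^ (-f.order) :=
  if_neg hf

@[simp]
theorem Kabs_zero : Kabs Fq 0 = 0 :=
  if_pos rfl

theorem Kabs_nonneg (f : Kt Fq) : 0 ≤ Kabs Fq f := by
  unfold Kabs
  positivity

theorem Kabs_mul (f g : Kt Fq) : Kabs Fq (f * g) = Kabs Fq f * Kabs Fq g := by
  rcases eq_or_ne f 0 with rfl | hf
  · simp
  rcases eq_or_ne g 0 with rfl | hg
  · simp
  rw [Kabs_of_ne_zero hf, Kabs_of_ne_zero hg, Kabs_of_ne_zero (mul_ne_zero hf hg),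
    HahnSeries.order_mul hf hg, neg_add, zpow_add₀ (zero_lt_one.trans one_lt_card_real).ne']

theorem isNonarchimedean_Kabs : IsNonarchimedean (Kabs Fq) := by
  intro f g
  rcases eq_or_ne f 0 with rfl | hf
  · simp
  rcases eq_or_ne g 0 with rfl | hg
  · simp
  rcases eq_or_ne (f + g) 0 with hfg | hfg
  · simp [hfg, Kabs_nonneg]
  rw [Kabs_of_ne_zero hf, Kabs_of_ne_zero hg, Kabs_of_ne_zero hfg,
    ← (zpow_right_mono₀ one_lt_card_real.le).map_max, max_neg_neg]
  exact zpow_le_zpow_right₀ one_lt_card_real.le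
    (neg_le_neg (HahnSeries.min_order_le_order_add hfg))

variable (Fq) in
/-- The function `Kabs` bundled as an absolute value, giving access to the general theory of
nonarchimedean absolute values. -/
def kabsAbsoluteValue : AbsoluteValue (Kt Fq) ℝ where
  toFun := Kabs Fq
  map_mul' := Kabs_mul
  nonneg' := Kabs_nonneg
  eq_zero' f := by
    refine ⟨fun hf => ?_, fun hf => hf ▸ Kabs_zero⟩
    by_contra hne
    exact (zpow_pos (zero_lt_one.trans one_lt_card_real) _).ne' (Kabs_of_ne_zero hne ▸ hf)
  add_le' _ _ := isNonarchimedean_Kabs.add_le Kabs_nonneg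

theorem Kabs_neg (f : Kt Fq) : Kabs Fq (-f) = Kabs Fq f :=
  (kabsAbsoluteValue Fq).map_neg f

theorem Kabs_single_one (k : ℤ) :
    Kabs Fq (HahnSeries.single k 1) = (Fintype.card Fq : ℝ) ^ (-k) := by
  rw [Kabs_of_ne_zero (HahnSeries.single_ne_zero one_ne_zero), HahnSeries.order_single one_ne_zero]

theorem Kabs_le_zpow_neg {f : Kt Fq} {m : ℤ} (hf : ∀ i < m, f.coeff i = 0) :
    Kabs Fq f ≤ (Fintype.card Fq : ℝ) ^ (-m) := by
  rcases eq_or_ne f 0 with rfl | hne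
  · rw [Kabs_zero]
    positivity
  rw [Kabs_of_ne_zero hne]
  refine zpow_le_zpow_right₀ one_lt_card_real.le (neg_le_neg ?_)
  exact not_lt.1 fun hlt => HahnSeries.coeff_order_eq_zero.not.2 hne (hf _ hlt)

omit [Fintype Fq] in
theorem polyK_monomial (n : ℕ) (a : Fq) :
    polyK Fq (Polynomial.monomial n a) = HahnSeries.single (-n : ℤ) a := by
  simp [polyK, Kx, Polynomial.aeval_monomial, HahnSeries.algebraMap_apply',
    HahnSeries.single_pow]

omit [Fintype Fq] in
theorem coeff_polyK (p : Polynomial Fq) (n : ℕ) : (polyK Fq p).coeff (-n) = p.coeff n := by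
  induction p using Polynomial.induction_on' with
  | add p q hp hq => rw [map_add, HahnSeries.coeff_add, hp, hq, Polynomial.coeff_add]
  | monomial m a =>
    simp only [polyK_monomial, HahnSeries.coeff_single, Polynomial.coeff_monomial, neg_inj,
      Nat.cast_inj, eq_comm]

omit [Fintype Fq] in
theorem exists_polynomial_coeff_eq (f : Kt Fq) :
    ∃ p : Polynomial Fq, ∀ n : ℕ, p.coeff n = f.coeff (-n) := by
  refine ⟨∑ n ∈ Finset.range (1 - f.order).toNat, Polynomial.monomial n (f.coeff (-n)),
    fun n => ?_⟩
  simp only [Polynomial.finsetSum_coeff, Polynomial.coeff_monomial, Finset.sum_ite_eq',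
    Finset.mem_range]
  split_ifs with hn
  · rfl
  · exact (HahnSeries.coeff_eq_zero_of_lt_order (by omega)).symm

theorem exists_Kabs_sub_polyK_le (f : Kt Fq) :
    ∃ p : Polynomial Fq, Kabs Fq (f - polyK Fq p) ≤ (Fintype.card Fq : ℝ)⁻¹ := by
  obtain ⟨p, hp⟩ := exists_polynomial_coeff_eq f
  refine ⟨p, zpow_neg_one (Fintype.card Fq : ℝ) ▸ Kabs_le_zpow_neg fun i hi => ?_⟩
  obtain ⟨n, rfl⟩ : ∃ n : ℕ, i = -n := ⟨(-i).toNat, by omega⟩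
  rw [HahnSeries.coeff_sub, coeff_polyK, hp, sub_self]

variable {d : ℕ}

theorem Kabs_le_vnorm (v : Fin d → Kt Fq) (i : Fin d) : Kabs Fq (v i) ≤ vnorm Fq v :=
  Finite.le_ciSup (fun i => Kabs Fq (v i)) i

theorem vnorm_nonneg (v : Fin d → Kt Fq) : 0 ≤ vnorm Fq v :=
  Real.iSup_nonneg fun _ => Kabs_nonneg _

theorem vnorm_le {v : Fin d → Kt Fq} {r : ℝ} (hr : 0 ≤ r) (hv : ∀ i, Kabs Fq (v i) ≤ r) :
    vnorm Fq v ≤ r :=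
  Real.iSup_le hv hr

theorem vnorm_single_le (j : Fin d) (y : Kt Fq) : vnorm Fq (Pi.single j y) ≤ Kabs Fq y := by
  refine vnorm_le (Kabs_nonneg y) fun i => ?_
  rw [Pi.single_apply]
  split_ifs
  · exact le_rfl
  · exact Kabs_zero.trans_le (Kabs_nonneg y)

theorem vnorm_sub_le_max (v w : Fin d → Kt Fq) :
    vnorm Fq (v - w) ≤ max (vnorm Fq v) (vnorm Fq w) := by
  refine vnorm_le (le_max_of_le_left (vnorm_nonneg v)) fun i => ?_
  calc Kabs Fq (v i - w i) ≤ max (Kabs Fq (v i)) (Kabs Fq (-w i)) := by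
        rw [sub_eq_add_neg]; exact isNonarchimedean_Kabs _ _
    _ = max (Kabs Fq (v i)) (Kabs Fq (w i)) := by rw [Kabs_neg]
    _ ≤ max (vnorm Fq v) (vnorm Fq w) := max_le_max (Kabs_le_vnorm v i) (Kabs_le_vnorm w i)

theorem vnorm_sum_smul_le {ι : Type*} [Fintype ι] {c : ι → Kt Fq} {v : ι → Fin d → Kt Fq}
    {a r : ℝ} (ha : 0 ≤ a) (hr : 0 ≤ r) (hc : ∀ j, Kabs Fq (c j) ≤ a)
    (hv : ∀ j, vnorm Fq (v j) ≤ r) : vnorm Fq (∑ j, c j • v j) ≤ a * r := by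
  refine vnorm_le (mul_nonneg ha hr) fun i => ?_
  rw [Finset.sum_apply]
  refine (IsNonarchimedean.apply_sum_univ_le (v := kabsAbsoluteValue Fq)
    isNonarchimedean_Kabs).trans (Real.iSup_le (fun j => ?_) (mul_nonneg ha hr))
  calc Kabs Fq (c j * v j i) = Kabs Fq (c j) * Kabs Fq (v j i) := Kabs_mul _ _
    _ ≤ a * r := mul_le_mul (hc j) ((Kabs_le_vnorm _ i).trans (hv j)) (Kabs_nonneg _) ha

theorem exists_mem_vnorm_sub_le {ι : Type*} [Finite ι]
    {Λ : Submodule (polyK Fq).range (Fin d → Kt Fq)} {v : ι → Fin d → Kt Fq} (hv : ∀ j, v j ∈ Λ)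
    {r : ℝ} (hr : 0 ≤ r) (hvr : ∀ j, vnorm Fq (v j) ≤ r) {w : Fin d → Kt Fq}
    (hw : w ∈ Submodule.span (Kt Fq) (Set.range v)) :
    ∃ u ∈ Λ, vnorm Fq (w - u) ≤ (Fintype.card Fq : ℝ)⁻¹ * r := by
  cases nonempty_fintype ι
  obtain ⟨c, rfl⟩ := (Submodule.mem_span_range_iff_exists_fun _).1 hw
  choose p hp using fun j => exists_Kabs_sub_polyK_le (c j)
  refine ⟨∑ j, polyK Fq (p j) • v j,
    Λ.sum_mem fun j _ => Λ.smul_mem ⟨_, Set.mem_range_self (p j)⟩ (hv j), ?_⟩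
  simp only [← Finset.sum_sub_distrib, ← sub_smul]
  exact vnorm_sum_smul_le (by positivity) hr hp hvr

omit [Fintype Fq] in
theorem iInf_sub_le {N : (Fin d → Kt Fq) → ℝ} (hN : ∀ v, 0 ≤ N v) {Λ : Set (Fin d → Kt Fq)}
    {w : Fin d → Kt Fq} {r : ℝ} (h : ∃ u ∈ Λ, N (w - u) ≤ r) : ⨅ u : Λ, N (w - u) ≤ r := by
  obtain ⟨u, hu, hwu⟩ := h
  exact ciInf_le_of_le ⟨0, Set.forall_mem_range.2 fun _ => hN _⟩ ⟨u, hu⟩ hwu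

omit [Fintype Fq] in
theorem covRad_le {N : (Fin d → Kt Fq) → ℝ} (hN : ∀ v, 0 ≤ N v) {Λ : Set (Fin d → Kt Fq)} {r : ℝ}
    (H : ∀ w, ∃ u ∈ Λ, N (w - u) ≤ r) : covRad Fq N Λ ≤ r :=
  ciSup_le fun w => iInf_sub_le hN (H w)

omit [Fintype Fq] in
theorem covRad_nonneg {N : (Fin d → Kt Fq) → ℝ} (hN : ∀ v, 0 ≤ N v) (Λ : Set (Fin d → Kt Fq)) :
    0 ≤ covRad Fq N Λ :=
  Real.iSup_nonneg fun _ => Real.iInf_nonneg fun _ => hN _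

-- Without the bound `B`, the supremum in `covRad` may be that of an unbounded set, which is `0`.
omit [Fintype Fq] in
theorem exists_mem_sub_lt_of_covRad_lt {N : (Fin d → Kt Fq) → ℝ} (hN : ∀ v, 0 ≤ N v)
    {Λ : Set (Fin d → Kt Fq)} {B : ℝ} (hB : ∀ w, ∃ u ∈ Λ, N (w - u) ≤ B) {r : ℝ}
    (hr : covRad Fq N Λ < r) (w : Fin d → Kt Fq) : ∃ u ∈ Λ, N (w - u) < r := by
  have hbdd : BddAbove (Set.range fun w => ⨅ u : Λ, N (w - u)) :=
    ⟨B, Set.forall_mem_range.2 fun w => iInf_sub_le hN (hB w)⟩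
  obtain ⟨u₀, hu₀, -⟩ := hB w
  have : Nonempty Λ := ⟨⟨u₀, hu₀⟩⟩
  obtain ⟨⟨u, hu⟩, hwu⟩ := exists_lt_of_ciInf_lt ((le_ciSup hbdd w).trans_lt hr)
  exact ⟨u, hu, hwu⟩

omit [Fintype Fq] in
theorem covRad_comp_mulVec {e : ℕ} {A : Matrix (Fin e) (Fin d) (Kt Fq)}
    (hA : Function.Surjective A.mulVec) (N : (Fin e → Kt Fq) → ℝ) (Λ : Set (Fin d → Kt Fq)) :
    covRad Fq (fun v => N (A.mulVec v)) Λ = covRad Fq N (A.mulVec '' Λ) := by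
  unfold covRad
  rw [← hA.iSup_comp]
  refine iSup_congr fun w => ?_
  rw [← (Set.imageFactorization_surjective (f := A.mulVec) (s := Λ)).iInf_comp]
  simp only [Matrix.mulVec_sub, Set.imageFactorization]

omit [Fintype Fq] in
theorem exists_linearIndependent_of_span_eq_top {Λ : Set (Fin d → Kt Fq)}
    (hΛ : Submodule.span (Kt Fq) Λ = ⊤) :
    ∃ v : Fin d → Fin d → Kt Fq, (∀ j, v j ∈ Λ) ∧ LinearIndependent (Kt Fq) v := by
  obtain ⟨v, hv, -, hli⟩ := Submodule.exists_fun_fin_finrank_span_eq (Kt Fq) Λ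
  have hd : d = Module.finrank (Kt Fq) (Submodule.span (Kt Fq) Λ) := by
    rw [hΛ, finrank_top, Module.finrank_fin_fun]
  exact ⟨v ∘ Fin.cast hd, fun j => hv _, hli.comp _ (Fin.cast_injective hd)⟩

theorem le_minima {Λ : Set (Fin d → Kt Fq)} (hΛ : Submodule.span (Kt Fq) Λ = ⊤) {b : ℝ}
    (H : ∀ r > 0, ∀ v : Fin d → Fin d → Kt Fq, (∀ j, v j ∈ Λ) → LinearIndependent (Kt Fq) v →
      (∀ j, vnorm Fq (v j) ≤ r) → b ≤ r) : b ≤ minima Fq Λ d := by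
  refine le_csInf ?_ fun r ⟨hr, v, hv, hli, hvr⟩ => H r hr v hv hli hvr
  obtain ⟨v, hv, hli⟩ := exists_linearIndependent_of_span_eq_top hΛ
  have hpos : 0 ≤ ⨆ j, vnorm Fq (v j) := Real.iSup_nonneg fun _ => vnorm_nonneg _
  refine ⟨(⨆ j, vnorm Fq (v j)) + 1, by positivity, v, hv, hli, fun j => ?_⟩
  exact (Finite.le_ciSup (fun j => vnorm Fq (v j)) j).trans (le_add_of_nonneg_right zero_le_one)

theorem minima_le_zpow {Λ : Set (Fin d → Kt Fq)} {k : ℤ}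
    (H : ∀ w, ∃ u ∈ Λ, vnorm Fq (w - u) < (Fintype.card Fq : ℝ) ^ k) :
    minima Fq Λ d ≤ (Fintype.card Fq : ℝ) ^ k := by
  obtain ⟨y, hy⟩ : ∃ y, Kabs Fq y = (Fintype.card Fq : ℝ) ^ k :=
    ⟨_, by rw [Kabs_single_one (-k), neg_neg]⟩
  rw [← hy] at H ⊢
  choose u hu hyu using fun j : Fin d => H (Pi.single j y)
  have hli : LinearIndependent (Kt Fq) u :=
    linearIndependent_of_forall_abv_single_sub_lt (abv := kabsAbsoluteValue Fq)
      isNonarchimedean_Kabs fun i j => (Kabs_le_vnorm _ i).trans_lt (hyu j)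
  have hnorm (j : Fin d) : vnorm Fq (u j) ≤ Kabs Fq y :=
    calc
      vnorm Fq (u j) = vnorm Fq (Pi.single j y - (Pi.single j y - u j)) := by
          rw [sub_sub_cancel]
      _ ≤ max (vnorm Fq (Pi.single j y)) (vnorm Fq (Pi.single j y - u j)) := vnorm_sub_le_max _ _
      _ ≤ Kabs Fq y := max_le (vnorm_single_le j y) (hyu j).le
  have hpos : 0 < Kabs Fq y := hy ▸ zpow_pos (zero_lt_one.trans one_lt_card_real) k
  exact csInf_le ⟨0, fun r hr => hr.1.le⟩ ⟨hpos, u, hu, hli, hnorm⟩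

theorem exists_mem_vnorm_sub_le_of_linearIndependent
    {Λ : Submodule (polyK Fq).range (Fin d → Kt Fq)} {v : Fin d → Fin d → Kt Fq}
    (hv : ∀ j, v j ∈ Λ) (hli : LinearIndependent (Kt Fq) v) {r : ℝ} (hr : 0 ≤ r)
    (hvr : ∀ j, vnorm Fq (v j) ≤ r) (w : Fin d → Kt Fq) :
    ∃ u ∈ Λ, vnorm Fq (w - u) ≤ (Fintype.card Fq : ℝ)⁻¹ * r := by
  have hspan : Submodule.span (Kt Fq) (Set.range v) = ⊤ :=
    hli.span_eq_top_of_card_eq_finrank' (by simp)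
  exact exists_mem_vnorm_sub_le hv hr hvr (hspan ▸ Submodule.mem_top)

theorem covRad_vnorm_le {Λ : Submodule (polyK Fq).range (Fin d → Kt Fq)}
    (hΛ : Submodule.span (Kt Fq) (Λ : Set (Fin d → Kt Fq)) = ⊤) :
    covRad Fq (vnorm Fq) (Λ : Set (Fin d → Kt Fq)) ≤
      (Fintype.card Fq : ℝ)⁻¹ * minima Fq (Λ : Set (Fin d → Kt Fq)) d := by
  have hq : 0 < (Fintype.card Fq : ℝ) := zero_lt_one.trans one_lt_card_real
  rw [le_inv_mul_iff₀ hq]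
  refine le_minima hΛ fun r hr v hv hli hvr => ?_
  rw [← le_inv_mul_iff₀ hq]
  exact covRad_le vnorm_nonneg (exists_mem_vnorm_sub_le_of_linearIndependent hv hli hr.le hvr)

theorem le_covRad_vnorm {Λ : Submodule (polyK Fq).range (Fin d → Kt Fq)}
    (hΛ : Submodule.span (Kt Fq) (Λ : Set (Fin d → Kt Fq)) = ⊤) :
    (Fintype.card Fq : ℝ)⁻¹ * minima Fq (Λ : Set (Fin d → Kt Fq)) d ≤
      covRad Fq (vnorm Fq) (Λ : Set (Fin d → Kt Fq)) := by
  have hq : 0 < (Fintype.card Fq : ℝ) := zero_lt_one.trans one_lt_card_real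
  obtain ⟨v, hv, hli⟩ := exists_linearIndependent_of_span_eq_top hΛ
  have hcover := exists_mem_vnorm_sub_le_of_linearIndependent hv hli
    (Real.iSup_nonneg fun _ => vnorm_nonneg _) (Finite.le_ciSup fun j => vnorm Fq (v j))
  refine le_of_forall_gt_imp_ge_of_dense fun x hx => ?_
  obtain ⟨n, hnx, hxn⟩ :=
    exists_mem_Ico_zpow ((covRad_nonneg vnorm_nonneg _).trans_lt hx) (one_lt_card_real (Fq := Fq))
  rw [inv_mul_le_iff₀ hq]
  calc minima Fq (Λ : Set (Fin d → Kt Fq)) d ≤ (Fintype.card Fq : ℝ) ^ (n + 1) :=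
        minima_le_zpow (exists_mem_sub_lt_of_covRad_lt vnorm_nonneg hcover (hx.trans hxn))
    _ = Fintype.card Fq * (Fintype.card Fq : ℝ) ^ n := by
        rw [add_comm, zpow_one_add₀ hq.ne']
    _ ≤ Fintype.card Fq * x := mul_le_mul_of_nonneg_left hnx hq.le

omit [Fintype Fq] in
theorem lattice_eq_span (g : Matrix (Fin d) (Fin d) (Kt Fq)) :
    lattice Fq g = Submodule.span (polyK Fq).range (Set.range g.col) := by
  ext v
  simp only [lattice, Set.mem_ofPred_eq, SetLike.mem_coe, Submodule.mem_span_range_iff_exists_fun]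
  have hsum (c : Fin d → Polynomial Fq) :
      g.mulVec (fun j => polyK Fq (c j)) = ∑ j, polyK Fq (c j) • g.col j := by
    ext i
    simp [Matrix.mulVec, dotProduct, mul_comm]
  constructor
  · rintro ⟨c, rfl⟩
    exact ⟨fun j => ⟨_, Set.mem_range_self (c j)⟩, (hsum c).symm⟩
  · rintro ⟨a, rfl⟩
    choose c hc using fun j => (a j).2
    refine ⟨c, ?_⟩
    rw [hsum]
    simp only [hc, Subring.smul_def]

omit [Fintype Fq] in
theorem span_lattice {g : Matrix (Fin d) (Fin d) (Kt Fq)} (hg : IsUnit g.det) :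
    Submodule.span (Kt Fq) (lattice Fq g) = ⊤ := by
  have hli : LinearIndependent (Kt Fq) g.col :=
    Matrix.linearIndependent_cols_of_isUnit ((Matrix.isUnit_iff_isUnit_det g).2 hg)
  rw [lattice_eq_span, Submodule.span_span_of_tower]
  exact hli.span_eq_top_of_card_eq_finrank' (by simp)

omit [Fintype Fq] in
theorem image_mulVec_lattice (A g : Matrix (Fin d) (Fin d) (Kt Fq)) :
    A.mulVec '' lattice Fq g = lattice Fq (A * g) := by
  ext v
  simp only [lattice, Set.mem_image, Set.mem_ofPred_eq]
  constructor
  · rintro ⟨_, ⟨c, rfl⟩, rfl⟩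
    exact ⟨c, Matrix.mulVec_mulVec ..⟩
  · rintro ⟨c, rfl⟩
    exact ⟨_, ⟨c, rfl⟩, Matrix.mulVec_mulVec ..⟩

theorem covRad_convex_body_general {h : Matrix (Fin d) (Fin d) (Kt Fq)} (hh : IsUnit h.det)
    {Λ : Submodule (polyK Fq).range (Fin d → Kt Fq)}
    (hΛ : Submodule.span (Kt Fq) (Λ : Set (Fin d → Kt Fq)) = ⊤) :
    covRad Fq (fun v => vnorm Fq (h⁻¹.mulVec v)) Λ
      = (Fintype.card Fq : ℝ)⁻¹ * minima Fq (h⁻¹.mulVec '' Λ) d := by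
  have hsurj : Function.Surjective h⁻¹.mulVec := fun w =>
    ⟨h.mulVec w, by rw [Matrix.mulVec_mulVec, Matrix.nonsing_inv_mul h hh, Matrix.one_mulVec]⟩
  have hspan : Submodule.span (Kt Fq) (h⁻¹.mulVec '' Λ) = ⊤ := by
    rw [← Matrix.coe_mulVecLin, ← Submodule.map_span, hΛ, Submodule.map_top,
      LinearMap.range_eq_top.2 hsurj]
  rw [covRad_comp_mulVec hsurj]
  let Λ' := Λ.map (h⁻¹.mulVecLin.restrictScalars (polyK Fq).range)
  exact le_antisymm (covRad_vnorm_le (Λ := Λ') hspan) (le_covRad_vnorm (Λ := Λ') hspan)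

end

/-- Covering radius with respect to a convex body `C = hO^d`:
`CovRad_C(Λ) = q⁻¹·λ_d(h⁻¹Λ)`. -/
theorem covRad_convex_body {d : ℕ} (hd : 2 ≤ d)
    (h g : Matrix (Fin d) (Fin d) (Kt Fq)) (hh : IsUnit h.det) (hg : IsUnit g.det) :
    covRad Fq (fun v => vnorm Fq (h⁻¹.mulVec v)) (lattice Fq g)
      = (Fintype.card Fq : ℝ)⁻¹ * minima Fq (lattice Fq (h⁻¹ * g)) d := by
  rw [lattice_eq_span, covRad_convex_body_general hh (lattice_eq_span g ▸ span_lattice hg),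
    ← lattice_eq_span, image_mulVec_lattice]
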